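/- arXiv:1801.06244 — 2 statements merged into one kernel-verified Lean document; each statement's English description precedes it below -/
import Mathlib

section
/- Euler's Pentagonal Number Theorem: for |q| < 1, ∏_{n=1}^∞ (1 - qⁿ) = Σ_{n∈ℤ} (-1)ⁿ q^{n(3n-1)/2}. -/
/-!
For `k = 0, 1, …` put `A k = ∑ₙ x ^ ((k + 1) * n) * ∏_{i ≤ n} (1 - x ^ (k + i + 1))`. Telescoping
gives `∏ (1 - x ^ (n + 1)) = 1 - x - x ^ 2 * A 0` and
`A k = 1 - x ^ (2 * k + 3) - x ^ (3 * k + 5) * A (k + 1)`; iterating, the product is a partial sum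
of the pentagonal series plus `± x ^ ((k + 1) * (3 * k + 4) / 2) * A k`. This algebraic part is
`Pentagonal.tprod_one_sub_pow`. Analytically it remains to see that all `A k` are bounded by one
constant: distinct powers of `x` have total norm at most `S = ∑ ‖x ^ m‖`, so the finite products
are bounded by `exp S` and `A k` by `S * exp S`.
-/

open Filter Function Topology

section SummableNormPow

theorem isTopologicallyNilpotent_of_summable_norm_pow {R : Type*} [SeminormedRing R] {x : R}
    (hx : Summable fun n : ℕ ↦ ‖x ^ n‖) : IsTopologicallyNilpotent x :=
  tendsto_zero_iff_norm_tendsto_zero.mpr hx.tendsto_atTop_zero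

variable {R ι : Type*} [NormedCommRing R] [NormOneClass R] {x : R}

theorem norm_prod_one_sub_le_exp_sum (s : Finset ι) (f : ι → R) :
    ‖∏ i ∈ s, (1 - f i)‖ ≤ Real.exp (∑ i ∈ s, ‖f i‖) := by
  have hdist : ‖∏ i ∈ s, (1 - f i) - 1‖ ≤ Real.exp (∑ i ∈ s, ‖f i‖) - 1 := by
    simpa [sub_eq_add_neg] using s.norm_prod_one_add_sub_one_le fun i ↦ -f i
  have htri := norm_le_norm_sub_add (∏ i ∈ s, (1 - f i)) 1
  rw [norm_one] at htri
  linarith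

theorem norm_prod_one_sub_pow_le (hx : Summable fun n : ℕ ↦ ‖x ^ n‖) {e : ι → ℕ}
    (he : Injective e) (s : Finset ι) :
    ‖∏ i ∈ s, (1 - x ^ e i)‖ ≤ Real.exp (∑' m : ℕ, ‖x ^ m‖) := by
  refine (norm_prod_one_sub_le_exp_sum s _).trans (Real.exp_le_exp.mpr ?_)
  calc ∑ i ∈ s, ‖x ^ e i‖
      ≤ ∑' i, ‖x ^ e i‖ := (hx.comp_injective he).sum_le_tsum s fun i _ ↦ norm_nonneg _
    _ ≤ ∑' m, ‖x ^ m‖ := tsum_comp_le_tsum_of_inj hx (fun _ ↦ norm_nonneg _) he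

theorem multipliable_one_sub_pow_of_injective [CompleteSpace R]
    (hx : Summable fun n : ℕ ↦ ‖x ^ n‖) {e : ι → ℕ} (he : Injective e) :
    Multipliable fun i ↦ 1 - x ^ e i := by
  simp_rw [sub_eq_add_neg]
  exact multipliable_one_add_of_summable <| by
    simpa [Function.comp_def] using hx.comp_injective he

end SummableNormPow

section EulerRemainder

/-- The terms `a k n` of the series `A k = ∑ₙ a k n` that is left over, up to a power of `x`, when
the first `k + 1` pairs of terms of the pentagonal series are subtracted from Euler's product. -/
def eulerRemainderTerm {R : Type*} [CommRing R] (x : R) (k n : ℕ) : R :=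
  x ^ ((k + 1) * n) * ∏ i ∈ Finset.range (n + 1), (1 - x ^ (k + i + 1))

variable {R : Type*} [NormedCommRing R] [NormOneClass R] {x : R}

theorem norm_eulerRemainderTerm_le (hx : Summable fun n : ℕ ↦ ‖x ^ n‖) (k n : ℕ) :
    ‖eulerRemainderTerm x k n‖ ≤ ‖x ^ ((k + 1) * n)‖ * Real.exp (∑' m : ℕ, ‖x ^ m‖) := by
  have hinj : Injective fun i ↦ k + i + 1 := fun _ _ h ↦ by simpa using h
  exact norm_mul_le_of_le le_rfl (norm_prod_one_sub_pow_le hx hinj _)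

theorem summable_eulerRemainderTerm [CompleteSpace R] (hx : Summable fun n : ℕ ↦ ‖x ^ n‖)
    (k : ℕ) : Summable (eulerRemainderTerm x k) :=
  .of_norm_bounded ((hx.comp_injective (mul_right_injective₀ k.succ_ne_zero)).mul_right _)
    (norm_eulerRemainderTerm_le hx k)

theorem norm_tsum_eulerRemainderTerm_le (hx : Summable fun n : ℕ ↦ ‖x ^ n‖) (k : ℕ) :
    ‖∑' n, eulerRemainderTerm x k n‖ ≤
      (∑' m : ℕ, ‖x ^ m‖) * Real.exp (∑' m : ℕ, ‖x ^ m‖) := by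
  have hinj : Injective fun n ↦ (k + 1) * n := mul_right_injective₀ k.succ_ne_zero
  calc ‖∑' n, eulerRemainderTerm x k n‖
      ≤ (∑' n, ‖x ^ ((k + 1) * n)‖) * Real.exp (∑' m : ℕ, ‖x ^ m‖) :=
        tsum_of_norm_bounded ((hx.comp_injective hinj).hasSum.mul_right _)
          (norm_eulerRemainderTerm_le hx k)
    _ ≤ (∑' m : ℕ, ‖x ^ m‖) * Real.exp (∑' m : ℕ, ‖x ^ m‖) := by
        refine mul_le_mul_of_nonneg_right ?_ (Real.exp_nonneg _)
        exact tsum_comp_le_tsum_of_inj hx (fun _ ↦ norm_nonneg _) hinj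

theorem tendsto_neg_one_pow_mul_tsum_eulerRemainderTerm (hx : Summable fun n : ℕ ↦ ‖x ^ n‖) :
    Tendsto (fun k ↦ (-1) ^ (k + 1) * x ^ ((k + 1) * (3 * k + 4) / 2) *
      ∑' n, eulerRemainderTerm x k n) atTop (𝓝 0) := by
  have hexp : Tendsto (fun k : ℕ ↦ (k + 1) * (3 * k + 4) / 2) atTop atTop :=
    tendsto_atTop_mono (fun k ↦ (Nat.le_div_iff_mul_le two_pos).mpr
      (show k * 2 ≤ (k + 1) * (3 * k + 4) by nlinarith)) tendsto_id
  have hpow := (isTopologicallyNilpotent_of_summable_norm_pow hx).comp hexp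
  have hsign : IsBoundedUnder (· ≤ ·) atTop fun k : ℕ ↦ ‖(-1 : R) ^ (k + 1)‖ :=
    isBoundedUnder_of ⟨1, fun k ↦ (norm_pow_le _ _).trans (by simp)⟩
  have hsum : IsBoundedUnder (· ≤ ·) atTop fun k ↦ ‖∑' n, eulerRemainderTerm x k n‖ :=
    isBoundedUnder_of ⟨_, norm_tsum_eulerRemainderTerm_le hx⟩
  exact (isBoundedUnder_le_mul_tendsto_zero hsign hpow).zero_mul_isBoundedUnder_le hsum

end EulerRemainder

section PentagonalSeries

theorem summable_negOnePow_mul_pow_pentagonal {R : Type*} [SeminormedRing R] [CompleteSpace R]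
    {x : R} (hx : Summable fun n : ℕ ↦ ‖x ^ n‖) :
    Summable fun n : ℤ ↦ (n.negOnePow : R) * x ^ pentagonal n := by
  refine .of_norm_bounded (hx.comp_injective pentagonal_injective) fun n ↦ ?_
  obtain h | h := Int.units_eq_one_or n.negOnePow <;> simp [h]

theorem hasSum_pow_pentagonal_neg_sub {R : Type*} [Ring R] [TopologicalSpace R] [ContinuousAdd R]
    {x a : R}
    (h : HasSum (fun n : ℤ ↦ (n.negOnePow : R) * x ^ pentagonal n) a) :
    HasSum (fun k : ℕ ↦ (-1) ^ k * (x ^ pentagonal (-k) - x ^ pentagonal (k + 1))) a := by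
  have hneg := (Equiv.neg ℤ).hasSum_iff.mpr h
  refine hneg.nat_add_neg_add_one.congr_fun fun k ↦ ?_
  simp only [comp_apply, Equiv.neg_apply, neg_neg, Int.negOnePow_neg, Int.negOnePow_succ,
    Units.val_neg, Int.cast_neg, Int.cast_negOnePow_natCast]
  noncomm_ring

end PentagonalSeries

theorem pentagonal_number_theorem_general {R : Type*} [NormedCommRing R] [NormOneClass R]
    [CompleteSpace R] {x : R} (hx : Summable fun n : ℕ ↦ ‖x ^ n‖) :
    ∏' n : ℕ, (1 - x ^ (n + 1)) = ∑' n : ℤ, (n.negOnePow : R) * x ^ pentagonal n := by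
  have hseries :=
    hasSum_pow_pentagonal_neg_sub (summable_negOnePow_mul_pow_pentagonal hx).hasSum
  rw [← hseries.tsum_eq]
  exact Pentagonal.tprod_one_sub_pow (isTopologicallyNilpotent_of_summable_norm_pow hx)
    (summable_eulerRemainderTerm hx)
    (fun k ↦ multipliable_one_sub_pow_of_injective hx fun _ _ h ↦ by simpa using h)
    hseries.summable (tendsto_neg_one_pow_mul_tsum_eulerRemainderTerm hx)

/-- Euler's Pentagonal Number Theorem: for `|q| < 1`,
`∏_{n=1}^∞ (1 - qⁿ) = Σ_{n∈ℤ} (-1)ⁿ q^{n(3n-1)/2}`. -/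
theorem pentagonal_number_theorem (q : ℂ) (hq : ‖q‖ < 1) :
    ∏' n : ℕ, (1 - q ^ (n + 1)) =
      ∑' n : ℤ, (-1 : ℂ) ^ n * q ^ (n * (3 * n - 1) / 2).toNat := by
  simpa only [Int.cast_negOnePow, pentagonal_def] using
    pentagonal_number_theorem_general (summable_norm_geometric_of_norm_lt_one hq)
end

section
/- For k ≥ 5/2 half-integral, y > 0, n > 0, m ≠ 0 real, and c > 0: ∫_{−∞+iy}^{∞+iy} τ^{−k} e^{−2πi(nτ + m/(c²τ))} dτ = 2π i^{−k} (c²n/m)^{(k−1)/2} J_{k−1}(4π√(mn)/c), where J_{k−1} is the Bessel function of the first kind (with the right side interpreted via the series Σ_p (−4π²mn/c²)^p/(p!Γ(p+k)) · 2πi^{−k}(2πn)^{k−1} when m < 0). -/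
open Complex Real

/-- The Bessel function of the first kind,
`J_ν(z) = Σ_{p=0}^∞ (-1)^p (z/2)^{2p+ν} / (p! Γ(p+ν+1))`, with principal-branch powers. -/
noncomputable def besselJ (ν : ℝ) (z : ℂ) : ℂ :=
  ∑' p : ℕ, (-1) ^ p * (z / 2) ^ (2 * p + ν : ℂ) / (p.factorial * Complex.Gamma (p + ν + 1))

/-!
Euler's integral `∫₀^∞ t^{s-1} e^{-wt} dt = w^{-s} Γ(s)`, continued analytically from `w > 0` to
`Re w > 0`, says that `w^{-s} Γ(s)` restricted to a vertical line is the Fourier transform of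
`t ↦ t^{s-1} e^{-at}` on `t > 0`. Fourier inversion turns this into Laplace's formula
`(1 / 2πi) ∫_{Re w = a} w^{-s} e^{tw} dw = t^{s-1} / Γ(s)`. The substitution `w = -2πiτ` rotates
the line `Im τ = y` to `Re w = 2πy` and `m / (c²τ)` becomes an exponent `B / w`; on the line `B / w`
is bounded, so `e^{B/w}` may be expanded and integrated term by term with Laplace's formula.
-/

open MeasureTheory Set Filter Topology FourierTransform

theorem mul_cpow_of_arg_add_arg_mem_Ioc {z w : ℂ} (hz : z ≠ 0) (hw : w ≠ 0)
    (h : z.arg + w.arg ∈ Ioc (-π) π) (a : ℂ) : (z * w) ^ a = z ^ a * w ^ a := by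
  rw [cpow_def_of_ne_zero (mul_ne_zero hz hw), cpow_def_of_ne_zero hz, cpow_def_of_ne_zero hw,
    Complex.log_mul hz hw h, add_mul, Complex.exp_add]

theorem I_mul_cpow_of_re_pos {w : ℂ} (hw : 0 < w.re) (a : ℂ) : (I * w) ^ a = I ^ a * w ^ a := by
  have hw0 : w ≠ 0 := by rintro rfl; simp at hw
  refine mul_cpow_of_arg_add_arg_mem_Ioc I_ne_zero hw0 ?_ a
  obtain ⟨hlower, hupper⟩ := abs_lt.1 (abs_arg_lt_pi_div_two_iff.2 (Or.inl hw))
  rw [arg_I]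
  constructor <;> linarith [Real.pi_pos]

theorem ofReal_mul_cpow_of_pos {r : ℝ} (hr : 0 < r) {w : ℂ} (hw : w ≠ 0) (a : ℂ) :
    ((r : ℂ) * w) ^ a = (r : ℂ) ^ a * w ^ a := by
  refine mul_cpow_of_arg_add_arg_mem_Ioc (ofReal_ne_zero.2 hr.ne') hw ?_ a
  rw [arg_ofReal_of_nonneg hr.le, zero_add]
  exact arg_mem_Ioc w

/-- The integrand `t ^ (s - 1) * exp (-r t)` of Euler's integral for `r ^ (-s) * Γ(s)`. It is
meaningful for `0 < t` only, so integrals of it are taken over `Ioi 0`. -/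
noncomputable def gammaKernel (s r : ℂ) (t : ℝ) : ℂ :=
  (t : ℂ) ^ (s - 1) * cexp (-(r * t))

section GammaKernel

variable {s r : ℂ} {t : ℝ}

theorem measurable_gammaKernel (s r : ℂ) : Measurable (gammaKernel s r) := by
  unfold gammaKernel
  fun_prop

theorem norm_gammaKernel (ht : 0 < t) :
    ‖gammaKernel s r t‖ = t ^ (s.re - 1) * Real.exp (-r.re * t) := by
  rw [gammaKernel, norm_mul, norm_cpow_eq_rpow_re_of_pos ht, Complex.norm_exp]
  simp

theorem continuousAt_gammaKernel (ht : 0 < t) : ContinuousAt (gammaKernel s r) t :=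
  (continuousAt_ofReal_cpow_const t _ (Or.inr ht.ne')).mul (by fun_prop)

theorem integrableOn_rpow_mul_exp_neg_mul {σ b : ℝ} (hσ : 0 < σ) (hb : 0 < b) :
    IntegrableOn (fun t : ℝ ↦ t ^ (σ - 1) * Real.exp (-b * t)) (Ioi 0) := by
  simpa only [Real.rpow_one] using
    integrableOn_rpow_mul_exp_neg_mul_rpow (by linarith : -1 < σ - 1) one_pos hb

theorem integrableOn_gammaKernel (hs : 0 < s.re) (hr : 0 < r.re) :
    IntegrableOn (gammaKernel s r) (Ioi 0) := by
  refine (integrableOn_rpow_mul_exp_neg_mul hs hr).mono'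
    (measurable_gammaKernel s r).aestronglyMeasurable ?_
  filter_upwards [ae_restrict_mem measurableSet_Ioi] with t ht
  exact (norm_gammaKernel ht).le

theorem hasDerivAt_gammaKernel (ht : 0 < t) :
    HasDerivAt (fun r ↦ gammaKernel s r t) (-gammaKernel (s + 1) r t) r := by
  have hexponent : HasDerivAt (fun z : ℂ ↦ -(z * t)) (-(t : ℂ)) r := by
    simpa using ((hasDerivAt_id r).mul_const (t : ℂ)).fun_neg
  convert! hexponent.cexp.const_mul ((t : ℂ) ^ (s - 1)) using 1
  have hpow : (t : ℂ) ^ (s + 1 - 1) = (t : ℂ) ^ (s - 1) * t := by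
    rw [add_sub_right_comm, cpow_add _ _ (ofReal_ne_zero.2 ht.ne'), cpow_one]
  rw [gammaKernel, hpow]
  ring

theorem hasDerivAt_integral_gammaKernel (hs : 0 < s.re) (hr : 0 < r.re) :
    HasDerivAt (fun r ↦ ∫ t in Ioi (0 : ℝ), gammaKernel s r t)
      (∫ t in Ioi (0 : ℝ), -gammaKernel (s + 1) r t) r := by
  have hnhds : {z : ℂ | r.re / 2 < z.re} ∈ 𝓝 r :=
    (isOpen_lt continuous_const continuous_re).mem_nhds (half_lt_self hr)
  refine (hasDerivAt_integral_of_dominated_loc_of_deriv_le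
    (F' := fun z t ↦ -gammaKernel (s + 1) z t)
    (bound := fun t ↦ t ^ (s.re + 1 - 1) * Real.exp (-(r.re / 2) * t)) hnhds
    (Eventually.of_forall fun z ↦ (measurable_gammaKernel s z).aestronglyMeasurable)
    (integrableOn_gammaKernel hs hr)
    (measurable_gammaKernel (s + 1) r).neg.aestronglyMeasurable ?_
    (integrableOn_rpow_mul_exp_neg_mul (by linarith) (half_pos hr)) ?_).2
  · filter_upwards [ae_restrict_mem measurableSet_Ioi] with t (ht : 0 < t) z (hz : r.re / 2 < z.re)
    rw [norm_neg, norm_gammaKernel ht, add_re, one_re]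
    gcongr
  · filter_upwards [ae_restrict_mem measurableSet_Ioi] with t ht z _
    exact hasDerivAt_gammaKernel ht

theorem integral_gammaKernel (hs : 0 < s.re) (hr : 0 < r.re) :
    ∫ t in Ioi (0 : ℝ), gammaKernel s r t = r ^ (-s) * Complex.Gamma s := by
  have hopen : IsOpen {z : ℂ | 0 < z.re} := isOpen_lt continuous_const continuous_re
  have hleft : AnalyticOnNhd ℂ (fun r ↦ ∫ t in Ioi (0 : ℝ), gammaKernel s r t)
      {z : ℂ | 0 < z.re} :=
    DifferentiableOn.analyticOnNhd (fun z hz ↦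
      (hasDerivAt_integral_gammaKernel hs hz).differentiableAt.differentiableWithinAt) hopen
  have hright : AnalyticOnNhd ℂ (fun r : ℂ ↦ r ^ (-s) * Complex.Gamma s) {z : ℂ | 0 < z.re} :=
    DifferentiableOn.analyticOnNhd (fun z hz ↦
      ((differentiableAt_id.cpow_const (Or.inl hz)).mul_const _).differentiableWithinAt) hopen
  have hreal : ∀ x : ℝ, 0 < x →
      ∫ t in Ioi (0 : ℝ), gammaKernel s x t = (x : ℂ) ^ (-s) * Complex.Gamma s := fun x hx ↦ by
    rw [cpow_neg, ← inv_cpow_ofReal_nonneg hx.le, ← one_div]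
    exact Complex.integral_cpow_mul_exp_neg_mul_Ioi hs hx
  have hofReal : Tendsto ((↑) : ℝ → ℂ) (𝓝[≠] 1) (𝓝[≠] 1) :=
    continuous_ofReal.continuousAt.continuousWithinAt.tendsto_nhdsWithin
      fun x hx ↦ ofReal_ne_one.2 hx
  have hpos : ∀ᶠ x : ℝ in 𝓝[≠] 1, 0 < x := nhdsWithin_le_nhds (lt_mem_nhds one_pos)
  exact hleft.eqOn_of_preconnected_of_frequently_eq hright
    (convex_halfSpace_re_gt 0).isPreconnected (z₀ := 1) (by simp)
    (hofReal.frequently (hpos.mono hreal).frequently) hr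

end GammaKernel

/-- The point `a + 2πiξ` of the vertical line `Re w = a`. In this parametrisation
`dξ = dw / (2πi)`, so integrals over `ξ` are Bromwich (inverse Laplace) integrals. -/
noncomputable def bromwichLine (a ξ : ℝ) : ℂ := a + 2 * π * ξ * I

section BromwichLine

variable {a t : ℝ} {s : ℂ}

theorem bromwichLine_re (a ξ : ℝ) : (bromwichLine a ξ).re = a := by
  simp [bromwichLine]

theorem bromwichLine_ne_zero (ha : 0 < a) (ξ : ℝ) : bromwichLine a ξ ≠ 0 := fun h ↦
  ha.ne' (by rw [← bromwichLine_re a ξ, h, zero_re])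

theorem le_norm_bromwichLine (a ξ : ℝ) : a ≤ ‖bromwichLine a ξ‖ :=
  (bromwichLine_re a ξ).symm.le.trans (re_le_norm _)

theorem measurable_bromwichLine (a : ℝ) : Measurable (bromwichLine a) := by
  unfold bromwichLine
  fun_prop

theorem fourier_indicator_gammaKernel (ha : 0 < a) (hs : 0 < s.re) (ξ : ℝ) :
    𝓕 ((Ioi 0).indicator (gammaKernel s a)) ξ =
      bromwichLine a ξ ^ (-s) * Complex.Gamma s := by
  have hshift : ∀ t : ℝ, cexp (↑(-2 * π * t * ξ) * I) • gammaKernel s a t =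
      gammaKernel s (bromwichLine a ξ) t := fun t ↦ by
    rw [gammaKernel, gammaKernel, smul_eq_mul, mul_left_comm, ← Complex.exp_add]
    congr 2
    rw [bromwichLine]
    push_cast
    ring
  rw [Real.fourier_real_eq_integral_exp_smul]
  simp_rw [← indicator_smul_apply (Ioi (0 : ℝ)) (fun t : ℝ ↦ cexp (↑(-2 * π * t * ξ) * I)), hshift]
  rw [integral_indicator measurableSet_Ioi,
    integral_gammaKernel hs (by rwa [bromwichLine_re])]

theorem integrable_norm_bromwichLine_rpow {σ : ℝ} (ha : 0 < a) (hσ : 1 < σ) :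
    Integrable fun ξ ↦ ‖bromwichLine a ξ‖ ^ (-σ) := by
  have hnorm : ∀ ξ, ‖bromwichLine a ξ‖ ^ (-σ) =
      a ^ (-σ) * (1 + ‖(2 * π / a) * ξ‖ ^ 2) ^ (-σ / 2) := fun ξ ↦ by
    have hsq : ‖bromwichLine a ξ‖ ^ 2 = a ^ 2 * (1 + ‖(2 * π / a) * ξ‖ ^ 2) := by
      rw [Complex.sq_norm, normSq_apply, Real.norm_eq_abs, sq_abs]
      simp [bromwichLine]
      field_simp
    have hroot : ∀ b : ℝ, 0 ≤ b → b ^ (-σ) = (b ^ 2) ^ (-σ / 2) := fun b hb ↦ by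
      rw [← Real.rpow_two, ← Real.rpow_mul hb, mul_div_cancel₀ _ two_ne_zero]
    rw [hroot _ (norm_nonneg _), hsq, Real.mul_rpow (by positivity) (by positivity), hroot a ha.le]
  simp_rw [hnorm]
  exact ((integrable_rpow_neg_one_add_norm_sq (by simpa using hσ)).comp_mul_left'
    (by positivity)).const_mul _

theorem integrable_bromwichLine_cpow (ha : 0 < a) (hs : 1 < s.re) :
    Integrable fun ξ ↦ bromwichLine a ξ ^ (-s) := by
  refine ((integrable_norm_bromwichLine_rpow ha hs).mul_const (Real.exp (π * |s.im|))).mono'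
    ((measurable_bromwichLine a).pow_const _).aestronglyMeasurable (Eventually.of_forall fun ξ ↦ ?_)
  have harg : arg (bromwichLine a ξ) * s.im ≤ π * |s.im| :=
    (le_abs_self _).trans <| abs_mul _ s.im ▸ by gcongr; exact abs_arg_le_pi _
  rw [norm_cpow_of_ne_zero (bromwichLine_ne_zero ha ξ), neg_re, neg_im, mul_neg, Real.exp_neg,
    div_inv_eq_mul]
  gcongr

theorem norm_exp_mul_bromwichLine (a t ξ : ℝ) :
    ‖cexp (t * bromwichLine a ξ)‖ = Real.exp (t * a) := by
  rw [Complex.norm_exp, re_ofReal_mul, bromwichLine_re]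

theorem integrable_bromwichLine_cpow_mul_exp (ha : 0 < a) (hs : 1 < s.re) (t : ℝ) :
    Integrable fun ξ ↦ bromwichLine a ξ ^ (-s) * cexp (t * bromwichLine a ξ) :=
  (integrable_bromwichLine_cpow ha hs).mul_bdd
    (measurable_const.mul (measurable_bromwichLine a)).cexp.aestronglyMeasurable
    (Eventually.of_forall fun ξ ↦ (norm_exp_mul_bromwichLine a t ξ).le)

theorem integral_bromwichLine_cpow_mul_exp (ha : 0 < a) (ht : 0 < t) (hs : 1 < s.re) :
    ∫ ξ, bromwichLine a ξ ^ (-s) * cexp (t * bromwichLine a ξ) =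
      (t : ℂ) ^ (s - 1) / Complex.Gamma s := by
  have hs0 : 0 < s.re := one_pos.trans hs
  have hΓ : Complex.Gamma s ≠ 0 := Complex.Gamma_ne_zero_of_re_pos hs0
  set f : ℝ → ℂ := (Ioi 0).indicator (gammaKernel s a)
  have hfourier : 𝓕 f = fun ξ ↦ bromwichLine a ξ ^ (-s) * Complex.Gamma s :=
    funext (fourier_indicator_gammaKernel ha hs0)
  have hf_int : Integrable f :=
    (integrable_indicator_iff measurableSet_Ioi).2 (integrableOn_gammaKernel hs0 (by simpa))
  have hfourier_int : Integrable (𝓕 f) :=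
    hfourier ▸ (integrable_bromwichLine_cpow ha hs).mul_const _
  have hf_eq : f =ᶠ[𝓝 t] gammaKernel s a :=
    (lt_mem_nhds ht).mono fun _ hu ↦ indicator_of_mem (mem_Ioi.2 hu) _
  have hinv := hf_int.fourierInv_fourier_eq hfourier_int
    ((continuousAt_gammaKernel ht).congr hf_eq.symm)
  rw [hfourier, Real.fourierInv_eq', hf_eq.eq_of_nhds, gammaKernel] at hinv
  have hterm : ∀ ξ : ℝ, bromwichLine a ξ ^ (-s) * cexp (t * bromwichLine a ξ) =
      cexp (a * t) / Complex.Gamma s * (cexp (↑(2 * π * inner ℝ ξ t) * I) •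
        (bromwichLine a ξ ^ (-s) * Complex.Gamma s)) := fun ξ ↦ by
    have hexp : cexp (t * bromwichLine a ξ) =
        cexp (a * t) * cexp (↑(2 * π * inner ℝ ξ t) * I) := by
      rw [← Complex.exp_add, bromwichLine]
      congr 1
      simp
      ring
    rw [hexp, smul_eq_mul]
    field_simp
  simp_rw [hterm]
  rw [integral_const_mul, hinv, Complex.exp_neg]
  field_simp [Complex.exp_ne_zero]

end BromwichLine

theorem hasSum_integral_mul_pow_div_factorial {α : Type*} [MeasurableSpace α] {μ : Measure α}
    {g u : α → ℂ} {M : ℝ} (hg : Integrable g μ) (hu : AEStronglyMeasurable u μ)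
    (hM : ∀ᵐ x ∂μ, ‖u x‖ ≤ M) :
    HasSum (fun p : ℕ ↦ ∫ x, g x * (u x ^ p / p.factorial) ∂μ) (∫ x, g x * cexp (u x) ∂μ) := by
  have hbound : ∀ b : ℝ, Summable fun p : ℕ ↦ b * (M ^ p / p.factorial) :=
    fun b ↦ (Real.summable_pow_div_factorial M).mul_left b
  refine hasSum_integral_of_dominated_convergence (fun p x ↦ ‖g x‖ * (M ^ p / p.factorial))
    (fun p ↦ hg.1.mul ((hu.pow p).mul_const _)) (fun p ↦ ?_)
    (Eventually.of_forall fun x ↦ hbound ‖g x‖) ?_ (Eventually.of_forall fun x ↦ ?_)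
  · filter_upwards [hM] with x hx
    rw [norm_mul, norm_div, norm_pow, Complex.norm_natCast]
    gcongr
  · simp_rw [tsum_mul_left]
    exact hg.norm.mul_const _
  · rw [Complex.exp_eq_exp_ℂ]
    exact (NormedSpace.expSeries_div_hasSum_exp (u x)).mul_left (g x)

theorem hasSum_integral_bromwichLine_cpow_mul_exp_add_div {a t : ℝ} {s : ℂ} (ha : 0 < a)
    (ht : 0 < t) (hs : 1 < s.re) (B : ℂ) :
    HasSum (fun p : ℕ ↦ (t : ℂ) ^ (s - 1) * ((B * t) ^ p / (p.factorial * Complex.Gamma (p + s))))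
      (∫ ξ, bromwichLine a ξ ^ (-s) * cexp (t * bromwichLine a ξ + B / bromwichLine a ξ)) := by
  have hB : ∀ ξ, ‖B / bromwichLine a ξ‖ ≤ ‖B‖ / a := fun ξ ↦ by
    rw [norm_div]
    gcongr
    exact le_norm_bromwichLine a ξ
  have hsum := hasSum_integral_mul_pow_div_factorial
    (integrable_bromwichLine_cpow_mul_exp ha hs t)
    ((measurable_bromwichLine a).const_div B).aestronglyMeasurable (Eventually.of_forall hB)
  have hterm : ∀ (p : ℕ) (ξ : ℝ), bromwichLine a ξ ^ (-s) * cexp (t * bromwichLine a ξ) *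
      ((B / bromwichLine a ξ) ^ p / p.factorial) = B ^ p / p.factorial *
        (bromwichLine a ξ ^ (-(p + s)) * cexp (t * bromwichLine a ξ)) := fun p ξ ↦ by
    rw [neg_add, cpow_add _ _ (bromwichLine_ne_zero ha ξ), cpow_neg _ (p : ℂ), cpow_natCast,
      div_pow]
    ring
  have hcoeff : ∀ p : ℕ, ∫ ξ, B ^ p / p.factorial *
      (bromwichLine a ξ ^ (-(p + s)) * cexp (t * bromwichLine a ξ)) =
        (t : ℂ) ^ (s - 1) * ((B * t) ^ p / (p.factorial * Complex.Gamma (p + s))) := fun p ↦ by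
    have hps : 1 < (p + s).re := by
      rw [add_re, natCast_re]
      exact hs.trans_le (le_add_of_nonneg_left p.cast_nonneg)
    rw [integral_const_mul, integral_bromwichLine_cpow_mul_exp ha ht hps, add_sub_assoc,
      cpow_add _ _ (ofReal_ne_zero.2 ht.ne'), cpow_natCast]
    ring
  simp_rw [hterm, hcoeff, mul_assoc, ← Complex.exp_add] at hsum
  exact hsum

theorem bromwichLine_two_pi_mul_neg (x y : ℝ) :
    bromwichLine (2 * π * y) (-x) = -(2 * π * I) * (x + y * I) := by
  rw [bromwichLine]
  push_cast
  linear_combination (2 * π * y : ℂ) * I_sq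

theorem add_mul_I_ne_zero_of_pos {y : ℝ} (hy : 0 < y) (x : ℝ) : (x : ℂ) + y * I ≠ 0 := fun h ↦
  hy.ne' (by simpa using congrArg im h)

theorem add_mul_I_cpow_neg {y : ℝ} (hy : 0 < y) (x : ℝ) (s : ℂ) :
    ((x : ℂ) + y * I) ^ (-s) =
      ((2 * π : ℝ) : ℂ) ^ s * I ^ (-s) * bromwichLine (2 * π * y) (-x) ^ (-s) := by
  have hre : 0 < (bromwichLine (2 * π * y) (-x)).re := by rw [bromwichLine_re]; positivity
  have hrotate : I * bromwichLine (2 * π * y) (-x) = (2 * π : ℝ) * (x + y * I) := by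
    rw [bromwichLine_two_pi_mul_neg]
    push_cast
    linear_combination (-2 * π * (x + y * I) : ℂ) * I_sq
  have hpow : ((2 * π : ℝ) : ℂ) ^ s ≠ 0 := by simp [cpow_eq_zero_iff, Real.pi_ne_zero]
  rw [mul_assoc, ← I_mul_cpow_of_re_pos hre, hrotate,
    ofReal_mul_cpow_of_pos Real.two_pi_pos (add_mul_I_ne_zero_of_pos hy x), cpow_neg (_ : ℝ),
    mul_inv_cancel_left₀ hpow]

theorem integral_add_mul_I_cpow_mul_exp {y n : ℝ} {k : ℂ} (hk : 1 < k.re) (hy : 0 < y)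
    (hn : 0 < n) (A : ℂ) :
    ∫ x : ℝ, ((x : ℂ) + y * I) ^ (-k) *
        cexp (-(2 * π * I) * (n * ((x : ℂ) + y * I) + A / ((x : ℂ) + y * I))) =
      2 * π * I ^ (-k) * ((2 * π * n : ℝ) : ℂ) ^ (k - 1) *
        ∑' p : ℕ, (-(4 * π ^ 2 * A) * n) ^ p / (p.factorial * Complex.Gamma (p + k)) := by
  set w : ℝ → ℂ := bromwichLine (2 * π * y) with hw
  set S : ℂ := ∑' p : ℕ, (-(4 * π ^ 2 * A) * n) ^ p / (p.factorial * Complex.Gamma (p + k))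
  have hexponent : ∀ x : ℝ, -(2 * π * I) * (n * ((x : ℂ) + y * I) + A / ((x : ℂ) + y * I)) =
      n * w (-x) + -(4 * π ^ 2 * A) / w (-x) := fun x ↦ by
    have hτ := add_mul_I_ne_zero_of_pos hy x
    rw [hw, bromwichLine_two_pi_mul_neg]
    generalize (x : ℂ) + y * I = τ at hτ
    field_simp
    linear_combination (-4 * A : ℂ) * I_sq
  have hline : ∫ ξ, w ξ ^ (-k) * cexp (n * w ξ + -(4 * π ^ 2 * A) / w ξ) =
      (n : ℂ) ^ (k - 1) * S := by
    rw [← tsum_mul_left]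
    exact (hasSum_integral_bromwichLine_cpow_mul_exp_add_div (by positivity) hn hk _).tsum_eq.symm
  have hconst : ((2 * π : ℝ) : ℂ) ^ k * (n : ℂ) ^ (k - 1) =
      2 * π * ((2 * π * n : ℝ) : ℂ) ^ (k - 1) := by
    have h2π : ((2 * π : ℝ) : ℂ) ≠ 0 := ofReal_ne_zero.2 Real.two_pi_pos.ne'
    rw [ofReal_mul (2 * π) n, mul_cpow_ofReal_nonneg Real.two_pi_pos.le hn.le, ← mul_assoc,
      cpow_sub _ _ h2π, cpow_one]
    push_cast at h2π ⊢
    field_simp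
  calc
    _ = ∫ x, ((2 * π : ℝ) : ℂ) ^ k * I ^ (-k) *
          (w (-x) ^ (-k) * cexp (n * w (-x) + -(4 * π ^ 2 * A) / w (-x))) := by
      simp_rw [hexponent, add_mul_I_cpow_neg hy, mul_assoc (_ * _) _ (cexp _), hw]
    _ = ((2 * π : ℝ) : ℂ) ^ k * I ^ (-k) * ((n : ℂ) ^ (k - 1) * S) := by
      rw [integral_const_mul,
        integral_neg_eq_self fun ξ ↦ w ξ ^ (-k) * cexp (n * w ξ + -(4 * π ^ 2 * A) / w ξ), hline]
    _ = 2 * π * I ^ (-k) * ((2 * π * n : ℝ) : ℂ) ^ (k - 1) * S := by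
      linear_combination I ^ (-k) * S * hconst

theorem besselJ_two_mul (ν : ℝ) {z : ℂ} (hz : z ≠ 0) :
    besselJ ν (2 * z) =
      z ^ (ν : ℂ) * ∑' p : ℕ, (-z ^ 2) ^ p / (p.factorial * Complex.Gamma (p + ν + 1)) := by
  rw [besselJ, ← tsum_mul_left]
  refine tsum_congr fun p ↦ ?_
  rw [mul_div_cancel_left₀ z two_ne_zero, cpow_add _ _ hz, ← Nat.cast_ofNat, ← Nat.cast_mul,
    cpow_natCast, pow_mul, neg_pow]
  ring

theorem cpow_mul_tsum_eq_cpow_mul_besselJ (k : ℝ) {u v : ℝ} (hu : 0 < u) (hv : 0 < v) :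
    (u : ℂ) ^ ((k : ℂ) - 1) *
        ∑' p : ℕ, ((-v ^ 2 : ℝ) : ℂ) ^ p / (p.factorial * Complex.Gamma (p + k)) =
      (((u / v) ^ 2 : ℝ) : ℂ) ^ (((k : ℂ) - 1) / 2) * besselJ (k - 1) ((2 * v : ℝ) : ℂ) := by
  have hrpow : u ^ (k - 1) = ((u / v) ^ 2) ^ ((k - 1) / 2) * v ^ (k - 1) := by
    rw [← Real.rpow_two, ← Real.rpow_mul (by positivity), mul_div_cancel₀ _ two_ne_zero,
      ← Real.mul_rpow (by positivity) hv.le, div_mul_cancel₀ _ hv.ne']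
  have hcpow : (u : ℂ) ^ ((k : ℂ) - 1) =
      (((u / v) ^ 2 : ℝ) : ℂ) ^ (((k : ℂ) - 1) / 2) * (v : ℂ) ^ ((k : ℂ) - 1) := by
    simpa [ofReal_cpow hu.le, ofReal_cpow hv.le, ofReal_cpow (sq_nonneg (u / v))]
      using congrArg ofReal hrpow
  rw [ofReal_mul, ofReal_ofNat, besselJ_two_mul _ (ofReal_ne_zero.2 hv.ne'), hcpow, mul_assoc]
  push_cast
  simp_rw [add_assoc, sub_add_cancel]

theorem contour_integral_bessel_general {k : ℝ} (hk : 1 < k) {y n c : ℝ} (m : ℝ) (hy : 0 < y)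
    (hn : 0 < n) (hc : 0 < c) :
    (∫ x : ℝ, ((x : ℂ) + y * Complex.I) ^ (-(k : ℂ)) *
        Complex.exp (-(2 * π * Complex.I) *
          (n * ((x : ℂ) + y * Complex.I) + m / (c ^ 2 * ((x : ℂ) + y * Complex.I)))))
      = 2 * π * Complex.I ^ (-(k : ℂ)) * ((2 * π * n : ℝ) : ℂ) ^ ((k : ℂ) - 1) *
          ∑' p : ℕ, ((-(4 * π ^ 2 * m * n / c ^ 2) : ℝ) : ℂ) ^ p /
            (p.factorial * Complex.Gamma (p + k)) ∧
    (0 < m →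
      2 * π * Complex.I ^ (-(k : ℂ)) * ((2 * π * n : ℝ) : ℂ) ^ ((k : ℂ) - 1) *
          (∑' p : ℕ, ((-(4 * π ^ 2 * m * n / c ^ 2) : ℝ) : ℂ) ^ p /
            (p.factorial * Complex.Gamma (p + k)))
        = 2 * π * Complex.I ^ (-(k : ℂ)) * ((c ^ 2 * n / m : ℝ) : ℂ) ^ (((k : ℂ) - 1) / 2) *
            besselJ (k - 1) ((4 * π * Real.sqrt (m * n) / c : ℝ) : ℂ)) := by
  refine ⟨?_, fun hm ↦ ?_⟩
  · have hcoeff : ((-(4 * π ^ 2 * m * n / c ^ 2) : ℝ) : ℂ) =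
        -(4 * π ^ 2 * ((m : ℂ) / c ^ 2)) * n := by
      push_cast
      ring
    simp_rw [hcoeff, ← div_div (m : ℂ)]
    exact integral_add_mul_I_cpow_mul_exp (k := k) (by simpa) hy hn _
  · set v : ℝ := 2 * π * √(m * n) / c with hv_def
    have hv : 0 < v := by positivity
    have hv_sq : v ^ 2 = 4 * π ^ 2 * m * n / c ^ 2 := by
      rw [hv_def, div_pow, mul_pow, Real.sq_sqrt (by positivity)]
      ring
    have hratio : c ^ 2 * n / m = (2 * π * n / v) ^ 2 := by
      rw [div_pow, hv_sq]
      field_simp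
      norm_num
    have harg : 4 * π * √(m * n) / c = 2 * v := by
      rw [hv_def]
      ring
    rw [harg, hratio, ← hv_sq, mul_assoc, mul_assoc _ _ (besselJ _ _),
      cpow_mul_tsum_eq_cpow_mul_besselJ k (by positivity) hv]

/-- For half-integral `k ≥ 5/2`, `y > 0`, `n > 0`, real `m ≠ 0`, and `c > 0`:
`∫_{−∞+iy}^{∞+iy} τ^{−k} e^{−2πi(nτ + m/(c²τ))} dτ
  = 2π i^{−k} (2πn)^{k−1} Σ_{p≥0} (−4π²mn/c²)^p/(p! Γ(p+k))`,
which for `m > 0` equals `2π i^{−k} (c²n/m)^{(k−1)/2} J_{k−1}(4π√(mn)/c)`.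
(`τ^{−k}` is the principal branch; the series is the interpretation of the Bessel
expression when `m < 0`.) -/
theorem contour_integral_bessel (k : ℝ) (hhalf : ∃ j : ℤ, k = j / 2) (hk : 5 / 2 ≤ k)
    (y n m c : ℝ) (hy : 0 < y) (hn : 0 < n) (hm : m ≠ 0) (hc : 0 < c) :
    (∫ x : ℝ, ((x : ℂ) + y * Complex.I) ^ (-(k : ℂ)) *
        Complex.exp (-(2 * π * Complex.I) *
          (n * ((x : ℂ) + y * Complex.I) + m / (c ^ 2 * ((x : ℂ) + y * Complex.I)))))
      = 2 * π * Complex.I ^ (-(k : ℂ)) * ((2 * π * n : ℝ) : ℂ) ^ ((k : ℂ) - 1) *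
          ∑' p : ℕ, ((-(4 * π ^ 2 * m * n / c ^ 2) : ℝ) : ℂ) ^ p /
            (p.factorial * Complex.Gamma (p + k)) ∧
    (0 < m →
      2 * π * Complex.I ^ (-(k : ℂ)) * ((2 * π * n : ℝ) : ℂ) ^ ((k : ℂ) - 1) *
          (∑' p : ℕ, ((-(4 * π ^ 2 * m * n / c ^ 2) : ℝ) : ℂ) ^ p /
            (p.factorial * Complex.Gamma (p + k)))
        = 2 * π * Complex.I ^ (-(k : ℂ)) * ((c ^ 2 * n / m : ℝ) : ℂ) ^ (((k : ℂ) - 1) / 2) *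
            besselJ (k - 1) ((4 * π * Real.sqrt (m * n) / c : ℝ) : ℂ)) := by
  exact contour_integral_bessel_general (by linarith) m hy hn hc
end
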